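/- In the PR-MDP zero-sum game there exists an optimal policy for the maximizing player that is stationary and deterministic, and strong duality holds on the set Π of deterministic stationary policies: the equilibrium value v* (the unique fixed point of T) satisfies, componentwise, v* = max_{μ∈Π} min_{ν∈Π} v^{μ,ν} = min_{ν∈Π} max_{μ∈Π} v^{μ,ν}. -/

import Mathlib

/-!
The rewards and transitions of the game separate additively in the two actions, so with
`Q v s a = r s a + γ ∑ s', P s s' a * v s'` the fixed-policy Bellman operator is
`(1 - α) ∫ Q v s dμ(s) + α ∫ Q v s dν(s)` (`Tpol_eq`). A continuous function on the compact space
`A` attains its extrema, hence a maximiser `d` and a minimiser `e` of `Q v s` form a pure saddle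
point of each one-step game, and the Shapley operator is
`F v s = (1 - α) max_a Q v s a + α min_a Q v s a` (`shapley_eq`). It is a `γ`-contraction of the
sup norm, so it has a unique fixed point `v*`.

Taking `d`, `e` greedy with respect to `v*` gives `v* ≤ T^{d,ν} v*` for all `ν` and
`T^{μ,e} v* ≤ v*` for all `μ`. Since `v^{μ,ν}` is a fixed point of the monotone operator
`T^{μ,ν}` (`vVal_fixed`), a discounted minimum principle (`nonneg_of_discounted`) turns these into
`v^{μ,e} ≤ v* ≤ v^{d,ν}`: the pair `(d, e)` is a saddle point of the discounted game. Comparison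
with constant vectors bounds all values uniformly, which keeps the real-valued suprema and infima
away from their junk values, and the saddle point yields all the max-min identities (`saddle`).
-/

open MeasureTheory

/-- Expected one-step reward `r^{μ,ν}(s) = ∫_A ∫_B r(s,a,b) dν(s)(b) dμ(s)(a)`. -/
noncomputable def rPol {S A B : Type*} [MeasurableSpace A] [MeasurableSpace B]
    (r : S → A → B → ℝ)
    (μ : S → ProbabilityMeasure A) (ν : S → ProbabilityMeasure B) (s : S) : ℝ :=
  ∫ a, ∫ b, r s a b ∂(ν s : Measure B) ∂(μ s : Measure A)

/-- Induced stochastic matrix `P^{μ,ν}(s,s') = ∫_A ∫_B P(s'|s,a,b) dν(s)(b) dμ(s)(a)`. -/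
noncomputable def Pmat {S A B : Type*} [Fintype S] [MeasurableSpace A] [MeasurableSpace B]
    (P : S → S → A → B → ℝ)
    (μ : S → ProbabilityMeasure A) (ν : S → ProbabilityMeasure B) : Matrix S S ℝ :=
  Matrix.of fun s s' => ∫ a, ∫ b, P s s' a b ∂(ν s : Measure B) ∂(μ s : Measure A)

/-- Fixed-policy Bellman operator `T^{μ,ν} v = r^{μ,ν} + γ P^{μ,ν} v`. -/
noncomputable def Tpol {S A B : Type*} [Fintype S] [MeasurableSpace A] [MeasurableSpace B]
    (γ : ℝ) (r : S → A → B → ℝ) (P : S → S → A → B → ℝ)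
    (μ : S → ProbabilityMeasure A) (ν : S → ProbabilityMeasure B)
    (v : S → ℝ) : S → ℝ :=
  fun s => rPol r μ ν s + γ * (Pmat P μ ν).mulVec v s

/-- Value of the pair of stationary policies: `v^{μ,ν} = Σ_{t≥0} γ^t (P^{μ,ν})^t r^{μ,ν}`. -/
noncomputable def vVal {S A B : Type*} [Fintype S] [DecidableEq S]
    [MeasurableSpace A] [MeasurableSpace B]
    (γ : ℝ) (r : S → A → B → ℝ) (P : S → S → A → B → ℝ)
    (μ : S → ProbabilityMeasure A) (ν : S → ProbabilityMeasure B) : S → ℝ :=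
  ∑' t : ℕ, γ ^ t • ((Pmat P μ ν ^ t).mulVec (rPol r μ ν))

/-- PR-MDP two-player reward `r_{P,α}(s,a,b) = (1-α) r(s,a) + α r(s,b)`. -/
noncomputable def rPR {S A : Type*} (α : ℝ) (r : S → A → ℝ) : S → A → A → ℝ :=
  fun s a b => (1 - α) * r s a + α * r s b

/-- PR-MDP two-player transitions `P_{P,α}(s'|s,a,b) = (1-α) P(s'|s,a) + α P(s'|s,b)`. -/
noncomputable def PPR {S A : Type*} (α : ℝ) (P : S → S → A → ℝ) : S → S → A → A → ℝ :=
  fun s s' a b => (1 - α) * P s s' a + α * P s s' b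

/-- Single-agent expected reward `r^μ(s) = ∫_A r(s,a) dμ(s)(a)`. -/
noncomputable def rPol1 {S A : Type*} [MeasurableSpace A]
    (r : S → A → ℝ) (μ : S → ProbabilityMeasure A) (s : S) : ℝ :=
  ∫ a, r s a ∂(μ s : Measure A)

/-- Single-agent induced stochastic matrix `P^μ(s,s') = ∫_A P(s'|s,a) dμ(s)(a)`. -/
noncomputable def Pmat1 {S A : Type*} [Fintype S] [MeasurableSpace A]
    (P : S → S → A → ℝ) (μ : S → ProbabilityMeasure A) : Matrix S S ℝ :=
  Matrix.of fun s s' => ∫ a, P s s' a ∂(μ s : Measure A)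

/-- The deterministic stationary policy `d : S → A`, identified with Dirac measures. -/
noncomputable def detPol {S A : Type*} [MeasurableSpace A] (d : S → A) :
    S → ProbabilityMeasure A :=
  fun s => ⟨MeasureTheory.Measure.dirac (d s), inferInstance⟩

namespace PRMDP

/-- A saddle point `(x₀, y₀)` of a real payoff `f` with value `c` determines both iterated
optima. The boundedness assumptions rule out junk values of `⨅` and `⨆`. -/
theorem saddle {X Y : Type*} (f : X → Y → ℝ) (x₀ : X) (y₀ : Y) (c : ℝ)
    (hlo : ∀ y, c ≤ f x₀ y) (hhi : ∀ x, f x y₀ ≤ c)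
    (hb : ∀ x, BddBelow (Set.range fun y => f x y))
    (ha : ∀ y, BddAbove (Set.range fun x => f x y)) :
    (⨅ y, f x₀ y) = c ∧ (⨆ x, ⨅ y, f x y) = c ∧ (⨅ y, ⨆ x, f x y) = c := by
  have : Nonempty X := ⟨x₀⟩
  have : Nonempty Y := ⟨y₀⟩
  have h1 : ∀ x, (⨅ y, f x y) ≤ c := fun x => (ciInf_le (hb x) y₀).trans (hhi x)
  have h2 : ∀ y, c ≤ ⨆ x, f x y := fun y => (hlo y).trans (le_ciSup (ha y) x₀)
  have h3 : c ≤ ⨅ y, f x₀ y := le_ciInf hlo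
  have h4 : (⨆ x, f x y₀) ≤ c := ciSup_le hhi
  refine ⟨le_antisymm (h1 x₀) h3, le_antisymm (ciSup_le h1) ?_, le_antisymm ?_ (le_ciInf h2)⟩
  · exact h3.trans (le_ciSup (f := fun x => ⨅ y, f x y) ⟨c, by rintro _ ⟨x, rfl⟩; exact h1 x⟩ x₀)
  · exact (ciInf_le (f := fun y => ⨆ x, f x y) ⟨c, by rintro _ ⟨y, rfl⟩; exact h2 y⟩ y₀).trans h4

/-! ### Discounted sums for a stochastic matrix -/

section Matrix

variable {S : Type*} [Fintype S]

/-- Minimum principle: if `γ M z ≤ z` for a stochastic `M` and `0 ≤ γ < 1`, then `z ≥ 0`;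
evaluate the inequality where `z` is minimal. -/
theorem nonneg_of_discounted (γ : ℝ) (hγ : 0 ≤ γ) (hγ1 : γ < 1) (M : Matrix S S ℝ)
    (h0 : ∀ s s', 0 ≤ M s s') (h1 : ∀ s, ∑ s', M s s' = 1) (z : S → ℝ)
    (hz : ∀ s, γ * M.mulVec z s ≤ z s) (s : S) : 0 ≤ z s := by
  have : Nonempty S := ⟨s⟩
  obtain ⟨t, ht⟩ := Finite.exists_min z
  have h2 : z t ≤ M.mulVec z t := by
    calc z t = ∑ s', M t s' * z t := by rw [← Finset.sum_mul, h1, one_mul]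
      _ ≤ ∑ s', M t s' * z s' :=
        Finset.sum_le_sum fun s' _ => mul_le_mul_of_nonneg_left (ht s') (h0 t s')
  have h3 := mul_le_mul_of_nonneg_left h2 hγ
  have h4 := hz t
  have h5 : 0 ≤ z t := by
    by_contra hneg
    push Not at hneg
    nlinarith
  exact h5.trans (ht s)

theorem norm_mulVec_le (M : Matrix S S ℝ)
    (h0 : ∀ s s', 0 ≤ M s s') (h1 : ∀ s, ∑ s', M s s' = 1) (z : S → ℝ) :
    ‖M.mulVec z‖ ≤ ‖z‖ := by
  refine (pi_norm_le_iff_of_nonneg (norm_nonneg z)).2 fun s => ?_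
  calc ‖M.mulVec z s‖ ≤ ∑ s', ‖M s s' * z s'‖ := norm_sum_le _ _
    _ ≤ ∑ s', M s s' * ‖z‖ := by
        refine Finset.sum_le_sum fun s' _ => ?_
        rw [norm_mul, Real.norm_of_nonneg (h0 s s')]
        exact mul_le_mul_of_nonneg_left (norm_le_pi_norm z s') (h0 s s')
    _ = ‖z‖ := by rw [← Finset.sum_mul, h1, one_mul]

theorem tsum_fixed [DecidableEq S] (γ : ℝ) (hγ : 0 ≤ γ) (hγ1 : γ < 1) (M : Matrix S S ℝ)
    (h0 : ∀ s s', 0 ≤ M s s') (h1 : ∀ s, ∑ s', M s s' = 1) (z : S → ℝ) :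
    (∑' t : ℕ, γ ^ t • (M ^ t).mulVec z)
      = z + γ • M.mulVec (∑' t : ℕ, γ ^ t • (M ^ t).mulVec z) := by
  have hstep : ∀ t : ℕ, (M ^ (t + 1)).mulVec z = M.mulVec ((M ^ t).mulVec z) := fun t => by
    rw [pow_succ', Matrix.mulVec_mulVec]
  have hn : ∀ t : ℕ, ‖(M ^ t).mulVec z‖ ≤ ‖z‖ := by
    intro t
    induction t with
    | zero => simp
    | succ t ih => rw [hstep]; exact (norm_mulVec_le M h0 h1 _).trans ih
  have hs : Summable fun t : ℕ => γ ^ t • (M ^ t).mulVec z := by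
    refine Summable.of_norm_bounded
      ((summable_geometric_of_lt_one hγ hγ1).mul_right ‖z‖) fun t => ?_
    rw [norm_smul, norm_pow, Real.norm_of_nonneg hγ]
    exact mul_le_mul_of_nonneg_left (hn t) (pow_nonneg hγ t)
  have hL := (LinearMap.toContinuousLinearMap M.mulVecLin).map_tsum hs
  simp only [LinearMap.coe_toContinuousLinearMap', Matrix.mulVecLin_apply] at hL
  conv_lhs => rw [hs.tsum_eq_zero_add]
  rw [hL, ← tsum_const_smul'' γ]
  simp only [pow_zero, Matrix.one_mulVec, one_smul]
  congr 1
  refine tsum_congr fun t => ?_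
  rw [hstep, Matrix.mulVec_smul, smul_smul, pow_succ']

end Matrix

/-! ### Separation of the two players -/

theorem exists_min_max {S A : Type*} [MetricSpace A] [CompactSpace A] [Nonempty A]
    {f : S → A → ℝ} (hf : ∀ s, Continuous (f s)) :
    ∃ d e : S → A, ∀ s a, f s a ≤ f s (d s) ∧ f s (e s) ≤ f s a := by
  have h : ∀ s, ∃ p : A × A, ∀ a, f s a ≤ f s p.1 ∧ f s p.2 ≤ f s a := by
    intro s
    obtain ⟨x, -, hx⟩ := isCompact_univ.exists_isMaxOn Set.univ_nonempty (hf s).continuousOn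
    obtain ⟨y, -, hy⟩ := isCompact_univ.exists_isMinOn Set.univ_nonempty (hf s).continuousOn
    exact ⟨(x, y), fun a => ⟨hx (Set.mem_univ a), hy (Set.mem_univ a)⟩⟩
  choose p hp using h
  exact ⟨fun s => (p s).1, fun s => (p s).2, hp⟩

section Game

variable {S A : Type*} [Fintype S]

/-- State-action value of the single-agent MDP with continuation value `v`. -/
def Q (γ : ℝ) (r : S → A → ℝ) (P : S → S → A → ℝ) (v : S → ℝ) (s : S) (a : A) : ℝ :=
  r s a + γ * ∑ s', P s s' a * v s'

theorem continuous_Q [MetricSpace A] (γ : ℝ) {r : S → A → ℝ} (hr : ∀ s, Continuous fun a : A => r s a)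
    {P : S → S → A → ℝ} (hPcont : ∀ s s', Continuous fun a : A => P s s' a) (v : S → ℝ) (s : S) :
    Continuous (Q γ r P v s) := by
  have h1 := hr s
  have h2 := hPcont s
  unfold Q
  fun_prop

/-- Closed form of the Shapley operator: maximise with weight `1 - α`, minimise with weight `α`. -/
noncomputable def F (γ α : ℝ) (r : S → A → ℝ) (P : S → S → A → ℝ) (v : S → ℝ) (s : S) : ℝ :=
  (1 - α) * (⨆ a, Q γ r P v s a) + α * ⨅ a, Q γ r P v s a

theorem Q_le (γ : ℝ) (hγ : 0 ≤ γ) (r : S → A → ℝ) (P : S → S → A → ℝ)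
    (hP0 : ∀ s s' a, 0 ≤ P s s' a) (hPsum : ∀ s a, ∑ s', P s s' a = 1)
    (v w : S → ℝ) (s : S) (a : A) : Q γ r P v s a ≤ Q γ r P w s a + γ * dist v w := by
  have h : ∑ s', P s s' a * v s' ≤ ∑ s', P s s' a * w s' + dist v w := by
    calc ∑ s', P s s' a * v s' ≤ ∑ s', (P s s' a * w s' + P s s' a * dist v w) := by
          refine Finset.sum_le_sum fun s' _ => ?_
          rw [← mul_add]
          refine mul_le_mul_of_nonneg_left ?_ (hP0 s s' a)
          have h1 := dist_le_pi_dist v w s'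
          rw [Real.dist_eq] at h1
          linarith [le_abs_self (v s' - w s')]
      _ = _ := by rw [Finset.sum_add_distrib, ← Finset.sum_mul, hPsum, one_mul]
  have h2 := mul_le_mul_of_nonneg_left h hγ
  unfold Q
  linarith

variable [MetricSpace A] [CompactSpace A]

theorem F_contracting [Nonempty A] (γ : ℝ) (hγ : γ ∈ Set.Ioo (0:ℝ) 1)
    (α : ℝ) (hα : α ∈ Set.Icc (0:ℝ) 1)
    (r : S → A → ℝ) (hr : ∀ s, Continuous fun a : A => r s a)
    (P : S → S → A → ℝ) (hPcont : ∀ s s', Continuous fun a : A => P s s' a)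
    (hP0 : ∀ s s' a, 0 ≤ P s s' a) (hPsum : ∀ s a, ∑ s', P s s' a = 1) :
    ContractingWith ⟨γ, hγ.1.le⟩ (F γ α r P) := by
  have hα0 := hα.1
  have hα1 : 0 ≤ 1 - α := sub_nonneg.2 hα.2
  have key : ∀ v w s, F γ α r P v s ≤ F γ α r P w s + γ * dist v w := by
    intro v w s
    have hbw := isCompact_range (continuous_Q γ hr hPcont w s)
    have hbv := isCompact_range (continuous_Q γ hr hPcont v s)
    have hq := Q_le γ hγ.1.le r P hP0 hPsum v w s
    have h1 : (⨆ a, Q γ r P v s a) ≤ (⨆ a, Q γ r P w s a) + γ * dist v w :=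
      ciSup_le fun a => (hq a).trans (by linarith [le_ciSup hbw.bddAbove a])
    have h2 : (⨅ a, Q γ r P v s a) - γ * dist v w ≤ ⨅ a, Q γ r P w s a :=
      le_ciInf fun a => by linarith [hq a, ciInf_le hbv.bddBelow a]
    have h3 := mul_le_mul_of_nonneg_left h1 hα1
    have h4 := mul_le_mul_of_nonneg_left h2 hα0
    unfold F
    linarith
  refine ⟨?_, LipschitzWith.of_dist_le_mul fun v w => ?_⟩
  · exact_mod_cast hγ.2
  · refine (dist_pi_le_iff (mul_nonneg hγ.1.le dist_nonneg)).2 fun s => ?_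
    have h1 := key v w s
    have h2 := key w v s
    rw [dist_comm w v] at h2
    rw [Real.dist_eq, abs_le]
    change -(γ * dist v w) ≤ _ ∧ _ ≤ γ * dist v w
    constructor <;> linarith

variable [MeasurableSpace A] [BorelSpace A]

theorem integrable_of_continuous {f : A → ℝ} (hf : Continuous f) (m : ProbabilityMeasure A) :
    Integrable f (m : Measure A) :=
  hf.integrable_of_hasCompactSupport (HasCompactSupport.of_compactSpace f)

theorem integral_bounds {f : A → ℝ} (hf : Continuous f) (m : ProbabilityMeasure A) {l u : ℝ}
    (hl : ∀ a, l ≤ f a) (hu : ∀ a, f a ≤ u) :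
    l ≤ ∫ a, f a ∂(m : Measure A) ∧ ∫ a, f a ∂(m : Measure A) ≤ u := by
  have hi := integrable_of_continuous hf m
  constructor
  · simpa using integral_mono (integrable_const l) hi hl
  · simpa using integral_mono hi (integrable_const u) hu

theorem integral_separate (α : ℝ) {f : A → ℝ} (hf : Continuous f) (m n : ProbabilityMeasure A) :
    ∫ a, ∫ b, ((1 - α) * f a + α * f b) ∂(n : Measure A) ∂(m : Measure A)
      = (1 - α) * ∫ a, f a ∂(m : Measure A) + α * ∫ b, f b ∂(n : Measure A) := by
  have hm := integrable_of_continuous hf m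
  have hn := integrable_of_continuous hf n
  have h : ∀ a, ∫ b, ((1 - α) * f a + α * f b) ∂(n : Measure A)
      = (1 - α) * f a + α * ∫ b, f b ∂(n : Measure A) := fun a => by
    rw [integral_add (integrable_const _) (hn.const_mul α), integral_const_mul α]
    simp
  simp_rw [h]
  rw [integral_add (hm.const_mul _) (integrable_const _), integral_const_mul]
  simp

theorem integral_Q (γ : ℝ) {r : S → A → ℝ} (hr : ∀ s, Continuous fun a : A => r s a)
    {P : S → S → A → ℝ} (hPcont : ∀ s s', Continuous fun a : A => P s s' a) (v : S → ℝ) (s : S)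
    (m : ProbabilityMeasure A) :
    ∫ a, Q γ r P v s a ∂(m : Measure A)
      = ∫ a, r s a ∂(m : Measure A) + γ * ∑ s', (∫ a, P s s' a ∂(m : Measure A)) * v s' := by
  have h1 := integrable_of_continuous (hr s) m
  have h2 := fun s' => (integrable_of_continuous (hPcont s s') m).mul_const (v s')
  unfold Q
  rw [integral_add h1 ((integrable_finsetSum _ fun s' _ => h2 s').const_mul γ),
    integral_const_mul, integral_finsetSum _ fun s' _ => h2 s']
  simp_rw [integral_mul_const]

theorem Pmat_apply (α : ℝ) {P : S → S → A → ℝ}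
    (hPcont : ∀ s s', Continuous fun a : A => P s s' a)
    (μ ν : S → ProbabilityMeasure A) (s s' : S) :
    Pmat (PPR α P) μ ν s s' = (1 - α) * ∫ a, P s s' a ∂(μ s : Measure A)
      + α * ∫ a, P s s' a ∂(ν s : Measure A) :=
  integral_separate α (hPcont s s') (μ s) (ν s)

theorem Pmat_nonneg (α : ℝ) (hα : α ∈ Set.Icc (0:ℝ) 1) {P : S → S → A → ℝ}
    (hPcont : ∀ s s', Continuous fun a : A => P s s' a) (hP0 : ∀ s s' a, 0 ≤ P s s' a)
    (μ ν : S → ProbabilityMeasure A) (s s' : S) : 0 ≤ Pmat (PPR α P) μ ν s s' := by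
  rw [Pmat_apply α hPcont]
  exact add_nonneg (mul_nonneg (sub_nonneg.2 hα.2) (integral_nonneg (hP0 s s')))
    (mul_nonneg hα.1 (integral_nonneg (hP0 s s')))

theorem Pmat_sum (α : ℝ) {P : S → S → A → ℝ}
    (hPcont : ∀ s s', Continuous fun a : A => P s s' a) (hPsum : ∀ s a, ∑ s', P s s' a = 1)
    (μ ν : S → ProbabilityMeasure A) (s : S) : ∑ s', Pmat (PPR α P) μ ν s s' = 1 := by
  have h : ∀ m : ProbabilityMeasure A, ∑ s', ∫ a, P s s' a ∂(m : Measure A) = 1 := fun m => by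
    rw [← integral_finsetSum _ fun s' _ => integrable_of_continuous (hPcont s s') m]
    simp [hPsum]
  simp_rw [Pmat_apply α hPcont]
  rw [Finset.sum_add_distrib, ← Finset.mul_sum, ← Finset.mul_sum, h, h]
  ring

theorem Tpol_eq (γ α : ℝ) {r : S → A → ℝ} (hr : ∀ s, Continuous fun a : A => r s a)
    {P : S → S → A → ℝ} (hPcont : ∀ s s', Continuous fun a : A => P s s' a)
    (μ ν : S → ProbabilityMeasure A) (v : S → ℝ) (s : S) :
    Tpol γ (rPR α r) (PPR α P) μ ν v s
      = (1 - α) * ∫ a, Q γ r P v s a ∂(μ s : Measure A)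
        + α * ∫ a, Q γ r P v s a ∂(ν s : Measure A) := by
  have h1 : rPol (rPR α r) μ ν s = _ := integral_separate α (hr s) (μ s) (ν s)
  have h2 : (Pmat (PPR α P) μ ν).mulVec v s
      = (1 - α) * ∑ s', (∫ a, P s s' a ∂(μ s : Measure A)) * v s'
        + α * ∑ s', (∫ a, P s s' a ∂(ν s : Measure A)) * v s' := by
    change ∑ s', Pmat (PPR α P) μ ν s s' * v s' = _
    rw [Finset.mul_sum, Finset.mul_sum, ← Finset.sum_add_distrib]
    refine Finset.sum_congr rfl fun s' _ => ?_
    rw [Pmat_apply α hPcont]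
    ring
  rw [integral_Q γ hr hPcont, integral_Q γ hr hPcont]
  unfold Tpol
  rw [h1, h2]
  ring

/-- With `d` and `e` pointwise maximisers and minimisers of `Q v`, the one-step game at `v` has
the saddle point `(d, e)`, of value `F v`. -/
theorem Tpol_saddle [Nonempty A] (γ α : ℝ) (hα : α ∈ Set.Icc (0:ℝ) 1)
    {r : S → A → ℝ} (hr : ∀ s, Continuous fun a : A => r s a)
    {P : S → S → A → ℝ} (hPcont : ∀ s s', Continuous fun a : A => P s s' a) (v : S → ℝ)
    {d e : S → A}
    (hde : ∀ s a, Q γ r P v s a ≤ Q γ r P v s (d s) ∧ Q γ r P v s (e s) ≤ Q γ r P v s a)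
    (s : S) :
    (∀ ν, F γ α r P v s ≤ Tpol γ (rPR α r) (PPR α P) (detPol d) ν v s) ∧
    (∀ μ, Tpol γ (rPR α r) (PPR α P) μ (detPol e) v s ≤ F γ α r P v s) := by
  have hQ := continuous_Q γ hr hPcont v s
  have hF : F γ α r P v s = (1 - α) * Q γ r P v s (d s) + α * Q γ r P v s (e s) := by
    have h1 : (⨆ a, Q γ r P v s a) = Q γ r P v s (d s) :=
      le_antisymm (ciSup_le fun a => (hde s a).1) (le_ciSup (isCompact_range hQ).bddAbove (d s))
    have h2 : (⨅ a, Q γ r P v s a) = Q γ r P v s (e s) :=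
      le_antisymm (ciInf_le (isCompact_range hQ).bddBelow (e s)) (le_ciInf fun a => (hde s a).2)
    rw [F, h1, h2]
  have hdirac : ∀ c : S → A, ∫ a, Q γ r P v s a ∂(detPol c s : Measure A) = Q γ r P v s (c s) :=
    fun c => integral_dirac _ _
  have hb := fun m => integral_bounds hQ m (fun a => (hde s a).2) (fun a => (hde s a).1)
  constructor
  · intro ν
    rw [Tpol_eq γ α hr hPcont, hF, hdirac]
    linarith [mul_le_mul_of_nonneg_left (hb (ν s)).1 hα.1]
  · intro μ
    rw [Tpol_eq γ α hr hPcont, hF, hdirac]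
    linarith [mul_le_mul_of_nonneg_left (hb (μ s)).2 (sub_nonneg.2 hα.2)]

theorem Tpol_bounds (γ α : ℝ) (hα : α ∈ Set.Icc (0:ℝ) 1)
    {r : S → A → ℝ} (hr : ∀ s, Continuous fun a : A => r s a)
    {P : S → S → A → ℝ} (hPcont : ∀ s s', Continuous fun a : A => P s s' a) (v : S → ℝ) (s : S)
    {l u : ℝ} (hl : ∀ a, l ≤ Q γ r P v s a) (hu : ∀ a, Q γ r P v s a ≤ u)
    (μ ν : S → ProbabilityMeasure A) :
    l ≤ Tpol γ (rPR α r) (PPR α P) μ ν v s ∧ Tpol γ (rPR α r) (PPR α P) μ ν v s ≤ u := by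
  have hQ := continuous_Q γ hr hPcont v s
  have h1 := integral_bounds hQ (μ s) hl hu
  have h2 := integral_bounds hQ (ν s) hl hu
  have hα1 : 0 ≤ 1 - α := sub_nonneg.2 hα.2
  rw [Tpol_eq γ α hr hPcont]
  constructor
  · linarith [mul_le_mul_of_nonneg_left h1.1 hα1, mul_le_mul_of_nonneg_left h2.1 hα.1]
  · linarith [mul_le_mul_of_nonneg_left h1.2 hα1, mul_le_mul_of_nonneg_left h2.2 hα.1]

theorem shapley_eq [Nonempty A] (γ α : ℝ) (hα : α ∈ Set.Icc (0:ℝ) 1)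
    {r : S → A → ℝ} (hr : ∀ s, Continuous fun a : A => r s a)
    {P : S → S → A → ℝ} (hPcont : ∀ s s', Continuous fun a : A => P s s' a) (v : S → ℝ) (s : S) :
    (⨆ μ : S → ProbabilityMeasure A, ⨅ ν : S → ProbabilityMeasure A,
      Tpol γ (rPR α r) (PPR α P) μ ν v s) = F γ α r P v s := by
  obtain ⟨d, e, hde⟩ := exists_min_max (continuous_Q γ hr hPcont v)
  have hsad := Tpol_saddle γ α hα hr hPcont v hde s
  have hbd := Tpol_bounds γ α hα hr hPcont v s (fun a => (hde s a).2) (fun a => (hde s a).1)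
  exact (saddle (fun μ ν => Tpol γ (rPR α r) (PPR α P) μ ν v s) (detPol d) (detPol e) _
    hsad.1 hsad.2 (fun μ => ⟨_, by rintro _ ⟨ν, rfl⟩; exact (hbd μ ν).1⟩)
    (fun ν => ⟨_, by rintro _ ⟨μ, rfl⟩; exact (hbd μ ν).2⟩)).2.1

/-! ### Values of stationary policies -/

variable [DecidableEq S]

theorem vVal_fixed (γ : ℝ) (hγ : γ ∈ Set.Ioo (0:ℝ) 1) (α : ℝ) (hα : α ∈ Set.Icc (0:ℝ) 1)
    (r : S → A → ℝ) {P : S → S → A → ℝ}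
    (hPcont : ∀ s s', Continuous fun a : A => P s s' a)
    (hP0 : ∀ s s' a, 0 ≤ P s s' a) (hPsum : ∀ s a, ∑ s', P s s' a = 1)
    (μ ν : S → ProbabilityMeasure A) (s : S) :
    vVal γ (rPR α r) (PPR α P) μ ν s
      = Tpol γ (rPR α r) (PPR α P) μ ν (vVal γ (rPR α r) (PPR α P) μ ν) s :=
  congrFun (tsum_fixed γ hγ.1.le hγ.2 _ (Pmat_nonneg α hα hPcont hP0 μ ν)
    (Pmat_sum α hPcont hPsum μ ν) _) s

/-- Sub- and supersolutions of the policy evaluation equation bound the value. -/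
theorem vVal_compare (γ : ℝ) (hγ : γ ∈ Set.Ioo (0:ℝ) 1) (α : ℝ) (hα : α ∈ Set.Icc (0:ℝ) 1)
    (r : S → A → ℝ) {P : S → S → A → ℝ}
    (hPcont : ∀ s s', Continuous fun a : A => P s s' a)
    (hP0 : ∀ s s' a, 0 ≤ P s s' a) (hPsum : ∀ s a, ∑ s', P s s' a = 1)
    (μ ν : S → ProbabilityMeasure A) (v : S → ℝ) :
    ((∀ s, v s ≤ Tpol γ (rPR α r) (PPR α P) μ ν v s) →
      ∀ s, v s ≤ vVal γ (rPR α r) (PPR α P) μ ν s) ∧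
    ((∀ s, Tpol γ (rPR α r) (PPR α P) μ ν v s ≤ v s) →
      ∀ s, vVal γ (rPR α r) (PPR α P) μ ν s ≤ v s) := by
  have hfix := vVal_fixed γ hγ α hα r hPcont hP0 hPsum μ ν
  have hmin := nonneg_of_discounted γ hγ.1.le hγ.2 _ (Pmat_nonneg α hα hPcont hP0 μ ν)
    (Pmat_sum α hPcont hPsum μ ν)
  set w := vVal γ (rPR α r) (PPR α P) μ ν
  unfold Tpol at *
  constructor
  · intro h s
    refine sub_nonneg.1 (hmin (w - v) (fun t => ?_) s)
    rw [Matrix.mulVec_sub, Pi.sub_apply, Pi.sub_apply]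
    linarith [h t, hfix t]
  · intro h s
    refine sub_nonneg.1 (hmin (v - w) (fun t => ?_) s)
    rw [Matrix.mulVec_sub, Pi.sub_apply, Pi.sub_apply]
    linarith [h t, hfix t]

theorem vVal_bounded (γ : ℝ) (hγ : γ ∈ Set.Ioo (0:ℝ) 1) (α : ℝ) (hα : α ∈ Set.Icc (0:ℝ) 1)
    {r : S → A → ℝ} (hr : ∀ s, Continuous fun a : A => r s a) {P : S → S → A → ℝ}
    (hPcont : ∀ s s', Continuous fun a : A => P s s' a)
    (hP0 : ∀ s s' a, 0 ≤ P s s' a) (hPsum : ∀ s a, ∑ s', P s s' a = 1) :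
    ∃ K : ℝ, ∀ (μ ν : S → ProbabilityMeasure A) (s : S),
      -K ≤ vVal γ (rPR α r) (PPR α P) μ ν s ∧ vVal γ (rPR α r) (PPR α P) μ ν s ≤ K := by
  have hR : ∃ R : ℝ, ∀ s a, |r s a| ≤ R := by
    have h : ∀ s, ∃ R : ℝ, ∀ a, |r s a| ≤ R := fun s => by
      obtain ⟨R, hR⟩ := (isCompact_range (hr s).abs).bddAbove
      exact ⟨R, fun a => hR ⟨a, rfl⟩⟩
    choose R hR using h
    obtain ⟨R', hR'⟩ := (Set.finite_range R).bddAbove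
    exact ⟨R', fun s a => (hR s a).trans (hR' ⟨s, rfl⟩)⟩
  obtain ⟨R, hR⟩ := hR
  have hne : 1 - γ ≠ 0 := by linarith [hγ.2]
  -- `K = R / (1 - γ)` solves `R + γ K = K`, so the constants `K` and `-K` are a super- and a
  -- subsolution for every pair of policies.
  obtain ⟨K, hK⟩ : ∃ K : ℝ, R + γ * K = K := ⟨R / (1 - γ), by field_simp; ring⟩
  have hQc : ∀ (c : ℝ) s a, Q γ r P (fun _ => c) s a = r s a + γ * c := fun c s a => by
    rw [Q, ← Finset.sum_mul, hPsum, one_mul]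
  refine ⟨K, fun μ ν s => ⟨?_, ?_⟩⟩
  · refine (vVal_compare γ hγ α hα r hPcont hP0 hPsum μ ν fun _ => -K).1 (fun t => ?_) s
    refine (Tpol_bounds γ α hα hr hPcont (fun _ => -K) t (u := R + γ * -K)
      (fun a => ?_) (fun a => ?_) μ ν).1
    · rw [hQc]; linarith [(abs_le.1 (hR t a)).1]
    · rw [hQc]; linarith [(abs_le.1 (hR t a)).2]
  · refine (vVal_compare γ hγ α hα r hPcont hP0 hPsum μ ν fun _ => K).2 (fun t => ?_) s
    refine (Tpol_bounds γ α hα hr hPcont (fun _ => K) t (l := -R + γ * K)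
      (fun a => ?_) (fun a => ?_) μ ν).2
    · rw [hQc]; linarith [(abs_le.1 (hR t a)).1]
    · rw [hQc]; linarith [(abs_le.1 (hR t a)).2]

end Game

end PRMDP

open PRMDP in
theorem stmt13 {S A : Type*} [Fintype S] [DecidableEq S]
    [MetricSpace A] [CompactSpace A] [Nonempty A] [MeasurableSpace A] [BorelSpace A]
    (γ : ℝ) (hγ : γ ∈ Set.Ioo (0:ℝ) 1)
    (α : ℝ) (hα : α ∈ Set.Icc (0:ℝ) 1)
    (r : S → A → ℝ) (hr : ∀ s, Continuous fun a : A => r s a)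
    (P : S → S → A → ℝ)
    (hPcont : ∀ s s', Continuous fun a : A => P s s' a)
    (hP0 : ∀ s s' a, 0 ≤ P s s' a) (hP1 : ∀ s s' a, P s s' a ≤ 1)
    (hPsum : ∀ s a, ∑ s', P s s' a = 1)
    :
    ∃ vstar : S → ℝ,
      (∀ s : S, (⨆ μ : S → ProbabilityMeasure A, ⨅ ν : S → ProbabilityMeasure A,
          Tpol γ (rPR α r) (PPR α P) μ ν vstar s) = vstar s)
      ∧ (∀ w : S → ℝ,
          (∀ s : S, (⨆ μ : S → ProbabilityMeasure A, ⨅ ν : S → ProbabilityMeasure A,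
              Tpol γ (rPR α r) (PPR α P) μ ν w s) = w s) → w = vstar)
      ∧ (∃ dstar : S → A, ∀ s : S,
          vstar s = ⨅ ν : S → ProbabilityMeasure A,
            vVal γ (rPR α r) (PPR α P) (detPol dstar) ν s)
      ∧ (∀ s : S, vstar s
          = ⨆ d : S → A, ⨅ e : S → A,
              vVal γ (rPR α r) (PPR α P) (detPol d) (detPol e) s)
      ∧ (∀ s : S, vstar s
          = ⨅ e : S → A, ⨆ d : S → A,
              vVal γ (rPR α r) (PPR α P) (detPol d) (detPol e) s) := by
  have hcon := F_contracting γ hγ α hα r hr P hPcont hP0 hPsum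
  set v := ContractingWith.fixedPoint _ hcon with hv
  have hfix : F γ α r P v = v := hcon.fixedPoint_isFixedPt
  obtain ⟨d, e, hde⟩ := exists_min_max (continuous_Q γ hr hPcont v)
  have hsad := Tpol_saddle γ α hα hr hPcont v hde
  rw [hfix] at hsad
  have hlo : ∀ ν s, v s ≤ vVal γ (rPR α r) (PPR α P) (detPol d) ν s := fun ν =>
    (vVal_compare γ hγ α hα r hPcont hP0 hPsum _ ν v).1 fun s => (hsad s).1 ν
  have hhi : ∀ μ s, vVal γ (rPR α r) (PPR α P) μ (detPol e) s ≤ v s := fun μ =>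
    (vVal_compare γ hγ α hα r hPcont hP0 hPsum μ _ v).2 fun s => (hsad s).2 μ
  obtain ⟨K, hK⟩ := vVal_bounded γ hγ α hα hr hPcont hP0 hPsum
  have hstoch := fun s => saddle (fun μ ν => vVal γ (rPR α r) (PPR α P) μ ν s)
    (detPol d) (detPol e) (v s) (fun ν => hlo ν s) (fun μ => hhi μ s)
    (fun μ => ⟨-K, by rintro _ ⟨ν, rfl⟩; exact (hK μ ν s).1⟩)
    (fun ν => ⟨K, by rintro _ ⟨μ, rfl⟩; exact (hK μ ν s).2⟩)
  have hdet := fun s => saddle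
    (fun d' e' => vVal γ (rPR α r) (PPR α P) (detPol d') (detPol e') s)
    d e (v s) (fun e' => hlo (detPol e') s) (fun d' => hhi (detPol d') s)
    (fun d' => ⟨-K, by rintro _ ⟨e', rfl⟩; exact (hK _ _ s).1⟩)
    (fun e' => ⟨K, by rintro _ ⟨d', rfl⟩; exact (hK _ _ s).2⟩)
  refine ⟨v, fun s => ?_, fun w hw => ?_, ⟨d, fun s => (hstoch s).1.symm⟩,
    fun s => (hdet s).2.1.symm, fun s => (hdet s).2.2.symm⟩
  · rw [shapley_eq γ α hα hr hPcont, hfix]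
  · refine hcon.fixedPoint_unique (funext fun s => ?_)
    rw [← shapley_eq γ α hα hr hPcont, hw]
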